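/- arXiv:1801.08775 — 3 statements merged into one kernel-verified Lean document; each statement's English description precedes it below -/
import Mathlib

section
/- Let f be an expansive homeomorphism with canonical coordinates of a compact metric space (M,d), where 3ξ is an expansivity constant and d is self-similar for f with expanding factor λ > 1 and constant ξ. If f has homogeneous entropy, then ent⁺(W^u_ξ(x)) = ent⁻(W^s_ξ(x)) = (1/2)·ent(M) for all x ∈ M. -/
open Filter Topology

def Ws {M : Type*} [MetricSpace M] (f : Equiv.Perm M) (eps : ℝ) (x : M) : Set M :=
  {y | ∀ n : ℕ, dist ((f ^ n) x) ((f ^ n) y) ≤ eps}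

def Wu {M : Type*} [MetricSpace M] (f : Equiv.Perm M) (eps : ℝ) (x : M) : Set M :=
  {y | ∀ n : ℕ, dist ((f.symm ^ n) x) ((f.symm ^ n) y) ≤ eps}

/-- Diameter of a set with respect to an arbitrary "metric" `ρ`. -/
noncomputable def rdiam {M : Type*} (ρ : M → M → ℝ) (A : Set M) : ℝ :=
  sSup {r : ℝ | ∃ a ∈ A, ∃ b ∈ A, r = ρ a b}

/-- Minimal cardinality of a finite cover of `X` by sets of `ρ`-diameter `< ε`. -/
noncomputable def covN {M : Type*} (X : Set M) (ρ : M → M → ℝ) (ε : ℝ) : ℕ :=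
  sInf {n : ℕ | ∃ U : Fin n → Set M, X ⊆ (⋃ i, U i) ∧ ∀ i, rdiam ρ (U i) < ε}

/-- `dᶠₙ(x,y) = max_{|k| ≤ n} d(fᵏ x, fᵏ y)`. -/
noncomputable def dFn {M : Type*} [MetricSpace M] (f : Equiv.Perm M) (n : ℕ) (x y : M) : ℝ :=
  sSup {r : ℝ | ∃ k : ℤ, |k| ≤ (n : ℤ) ∧ r = dist ((f ^ k) x) ((f ^ k) y)}

/-- `d⁺ₙ(x,y) = max_{0 ≤ k ≤ n} d(fᵏ x, fᵏ y)`. -/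
noncomputable def dPlusn {M : Type*} [MetricSpace M] (f : Equiv.Perm M) (n : ℕ) (x y : M) : ℝ :=
  sSup {r : ℝ | ∃ k : ℕ, k ≤ n ∧ r = dist ((f ^ k) x) ((f ^ k) y)}

/-- `d⁻ₙ(x,y) = max_{0 ≤ k ≤ n} d(f⁻ᵏ x, f⁻ᵏ y)`. -/
noncomputable def dMinusn {M : Type*} [MetricSpace M] (f : Equiv.Perm M) (n : ℕ) (x y : M) : ℝ :=
  sSup {r : ℝ | ∃ k : ℕ, k ≤ n ∧ r = dist ((f.symm ^ k) x) ((f.symm ^ k) y)}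

/-- `X` is covered by at most `b` sets satisfying `P`. -/
def CoverBy {M : Type*} (P : Set M → Prop) (X : Set M) (b : ℝ) : Prop :=
  ∃ S : Finset (Set M), (S.card : ℝ) ≤ b ∧ (∀ x ∈ X, ∃ A ∈ S, x ∈ A) ∧ ∀ A ∈ S, P A

/-- All iterates with times in `T` of `A` have diameter at most `η`. -/
def SmallOn {M : Type*} [MetricSpace M] (f : Equiv.Perm M) (T : Set ℤ) (η : ℝ) (A : Set M) : Prop :=
  ∀ p ∈ A, ∀ q ∈ A, ∀ k ∈ T, dist ((f ^ k) p) ((f ^ k) q) ≤ η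

lemma CoverBy.mono {M : Type*} {P : Set M → Prop} {X : Set M} {b c : ℝ} (h : CoverBy P X b)
    (hbc : b ≤ c) : CoverBy P X c := by
  obtain ⟨S, h1, h2, h3⟩ := h
  exact ⟨S, h1.trans hbc, h2, h3⟩

lemma CoverBy.map {M : Type*} {P Q : Set M → Prop} {X Y : Set M} {b : ℝ} (h : CoverBy P X b)
    (g : Set M → Set M) (hg : ∀ A, P A → Q (g A))
    (hY : ∀ y ∈ Y, ∃ x ∈ X, ∀ A, x ∈ A → y ∈ g A) : CoverBy Q Y b := by
  classical
  obtain ⟨S, h1, h2, h3⟩ := h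
  refine ⟨S.image g, le_trans (by exact_mod_cast Finset.card_image_le) h1, ?_, ?_⟩
  · intro y hy
    obtain ⟨x, hx, hxA⟩ := hY y hy
    obtain ⟨A, hA, hxA'⟩ := h2 x hx
    exact ⟨g A, Finset.mem_image_of_mem g hA, hxA A hxA'⟩
  · intro B hB
    obtain ⟨A, hA, rfl⟩ := Finset.mem_image.1 hB
    exact hg A (h3 A hA)

lemma CoverBy.comp {M : Type*} {P Q : Set M → Prop} {X : Set M} {b c : ℝ} (h : CoverBy P X b)
    (hc : 0 ≤ c) (hPQ : ∀ A, P A → CoverBy Q A c) : CoverBy Q X (b * c) := by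
  classical
  obtain ⟨S, h1, h2, h3⟩ := h
  have hch : ∀ A : Set M, ∃ R : Finset (Set M), A ∈ S →
      (R.card : ℝ) ≤ c ∧ (∀ x ∈ A, ∃ B ∈ R, x ∈ B) ∧ ∀ B ∈ R, Q B := by
    intro A
    by_cases hA : A ∈ S
    · obtain ⟨R, hR⟩ := hPQ A (h3 A hA)
      exact ⟨R, fun _ => hR⟩
    · exact ⟨∅, fun h => absurd h hA⟩
  choose R hR using hch
  refine ⟨S.biUnion R, ?_, ?_, ?_⟩
  · calc ((S.biUnion R).card : ℝ) ≤ ∑ A ∈ S, ((R A).card : ℝ) := by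
          exact_mod_cast Finset.card_biUnion_le
      _ ≤ ∑ A ∈ S, c := Finset.sum_le_sum fun A hA => (hR A hA).1
      _ = S.card * c := by simp
      _ ≤ b * c := by gcongr
  · intro x hx
    obtain ⟨A, hA, hxA⟩ := h2 x hx
    obtain ⟨B, hB, hxB⟩ := (hR A hA).2.1 x hxA
    exact ⟨B, Finset.mem_biUnion.2 ⟨A, hA, hB⟩, hxB⟩
  · intro B hB
    obtain ⟨A, hA, hB⟩ := Finset.mem_biUnion.1 hB
    exact (hR A hA).2.2 B hB

set_option linter.unusedSectionVars false

section
variable {M : Type*} [MetricSpace M] [CompactSpace M]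

lemma cont_zpow (f : Equiv.Perm M) (hf : Continuous f) (hf' : Continuous f.symm) (k : ℤ) :
    Continuous (f ^ k : Equiv.Perm M) := by
  have hn : ∀ (g : Equiv.Perm M), Continuous g → ∀ n : ℕ, Continuous (g ^ n : Equiv.Perm M) := by
    intro g hg n
    induction n with
    | zero => simpa using continuous_id
    | succ n ih =>
      rw [pow_succ]
      exact ih.comp hg
  obtain ⟨n, rfl | rfl⟩ := Int.eq_nat_or_neg k
  · rw [zpow_natCast]; exact hn f hf n
  · rw [zpow_neg, zpow_natCast, ← inv_pow]
    exact hn _ hf' n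

lemma exists_cov (f : Equiv.Perm M) (hf : Continuous f) (hf' : Continuous f.symm)
    (T : Set ℤ) (hT : T.Finite) (η : ℝ) (hη : 0 < η) :
    ∃ b : ℝ, 0 ≤ b ∧ CoverBy (SmallOn f T η) Set.univ b := by
  classical
  let U : M → Set M := fun p => {q | ∀ k ∈ T, dist ((f ^ k) q) ((f ^ k) p) < η / 2}
  have hU : ∀ p, IsOpen (U p) := by
    intro p
    have : U p = ⋂ k ∈ T, {q | dist ((f ^ k) q) ((f ^ k) p) < η / 2} := by
      ext q; simp [U]
    rw [this]
    refine hT.isOpen_biInter fun k _ => ?_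
    exact isOpen_lt ((cont_zpow f hf hf' k).dist continuous_const) continuous_const
  obtain ⟨t, ht⟩ := isCompact_univ.elim_finite_subcover U hU
    (fun p _ => Set.mem_iUnion.2 ⟨p, fun k _ => by simpa using half_pos hη⟩)
  refine ⟨(t.image U).card, by positivity, t.image U, le_rfl, ?_, ?_⟩
  · intro x hx
    obtain ⟨p, hp, hxp⟩ := Set.mem_iUnion₂.1 (ht hx)
    exact ⟨U p, Finset.mem_image_of_mem U hp, hxp⟩
  · intro A hA
    obtain ⟨p, _, rfl⟩ := Finset.mem_image.1 hA
    intro a ha b hb k hk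
    have h1 := ha k hk
    have h2 := hb k hk
    have h3 := dist_triangle_right ((f ^ k) a) ((f ^ k) b) ((f ^ k) p)
    linarith

lemma unif_exp (f : Equiv.Perm M) (hf : Continuous f) (hf' : Continuous f.symm) (c : ℝ)
    (hexp : ∀ x y : M, x ≠ y → ∃ n : ℤ, c < dist ((f ^ n) x) ((f ^ n) y))
    (η : ℝ) (hη : 0 < η) :
    ∃ m : ℕ, ∀ p q : M, (∀ k ∈ Set.Icc (-(m : ℤ)) m, dist ((f ^ k) p) ((f ^ k) q) ≤ c) →
      dist p q ≤ η := by
  let C : Set (M × M) := {z | η ≤ dist z.1 z.2}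
  have hC : IsCompact C := (isClosed_le continuous_const continuous_dist).isCompact
  let U : ℕ → Set (M × M) := fun m =>
    {z | ∃ k ∈ Set.Icc (-(m : ℤ)) m, c < dist ((f ^ k) z.1) ((f ^ k) z.2)}
  have hU : ∀ m, IsOpen (U m) := by
    intro m
    have : U m = ⋃ k ∈ Set.Icc (-(m : ℤ)) m, {z | c < dist ((f ^ k) z.1) ((f ^ k) z.2)} := by
      ext z; simp [U]
    rw [this]
    refine isOpen_biUnion fun k _ => ?_
    exact isOpen_lt continuous_const (((cont_zpow f hf hf' k).comp continuous_fst).dist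
      ((cont_zpow f hf hf' k).comp continuous_snd))
  have hmono : Monotone U := by
    intro m n hmn z hz
    obtain ⟨k, hk, hz⟩ := hz
    refine ⟨k, ⟨?_, ?_⟩, hz⟩
    · have := hk.1; omega
    · have := hk.2; omega
  obtain ⟨m, hm⟩ := hC.elim_directed_cover U hU (by
    intro z hz
    have hne : z.1 ≠ z.2 := by
      intro h
      have : η ≤ dist z.1 z.2 := hz
      rw [h, dist_self] at this
      linarith
    obtain ⟨n, hn⟩ := hexp _ _ hne
    exact Set.mem_iUnion.2 ⟨n.natAbs, n, ⟨by omega, by omega⟩, hn⟩) (hmono.directed_le)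
  refine ⟨m, fun p q h => ?_⟩
  by_contra hlt
  push Not at hlt
  obtain ⟨k, hk, hc⟩ := hm (show (p, q) ∈ C from hlt.le)
  exact absurd (h k hk) (not_le.2 hc)

lemma refine_cov (f : Equiv.Perm M) (hf : Continuous f) (hf' : Continuous f.symm) (c : ℝ)
    (hexp : ∀ x y : M, x ≠ y → ∃ n : ℤ, c < dist ((f ^ n) x) ((f ^ n) y))
    (η : ℝ) (hη : 0 < η) :
    ∃ K : ℝ, 0 < K ∧ ∀ a b : ℤ, ∀ A : Set M, SmallOn f (Set.Icc a b) c A →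
      CoverBy (SmallOn f (Set.Icc a b) η) A K := by
  classical
  obtain ⟨m, hm⟩ := unif_exp f hf hf' c hexp η hη
  obtain ⟨κ, hκ, S, hS1, hS2, hS3⟩ :=
    exists_cov f hf hf' (Set.Icc (-(m : ℤ)) m) (Set.finite_Icc _ _) η hη
  refine ⟨κ * κ + 1, by positivity, fun a b A hA => ?_⟩
  refine ⟨(S ×ˢ S).image fun z => A ∩ {p | (f ^ a) p ∈ z.1 ∧ (f ^ b) p ∈ z.2}, ?_, ?_, ?_⟩
  · have h1 : (((S ×ˢ S).image fun z : Set M × Set M =>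
        A ∩ {p | (f ^ a) p ∈ z.1 ∧ (f ^ b) p ∈ z.2}).card : ℝ) ≤ (S ×ˢ S).card := by
      exact_mod_cast Finset.card_image_le
    rw [Finset.card_product] at h1
    push_cast at h1
    have : (S.card : ℝ) * S.card ≤ κ * κ := by gcongr
    linarith
  · intro p hp
    obtain ⟨U, hU, hpU⟩ := hS2 ((f ^ a) p) trivial
    obtain ⟨V, hV, hpV⟩ := hS2 ((f ^ b) p) trivial
    exact ⟨_, Finset.mem_image.2 ⟨(U, V), Finset.mem_product.2 ⟨hU, hV⟩, rfl⟩, hp, hpU, hpV⟩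
  · intro B hB
    obtain ⟨⟨U, V⟩, hUV, rfl⟩ := Finset.mem_image.1 hB
    obtain ⟨hU, hV⟩ := Finset.mem_product.1 hUV
    rintro p ⟨hp, hpU, hpV⟩ q ⟨hq, hqU, hqV⟩ k hk
    have hcomp : ∀ (i j : ℤ) (z : M), (f ^ i) ((f ^ j) z) = (f ^ (i + j)) z := by
      intro i j z
      rw [zpow_add, Equiv.Perm.mul_apply]
    obtain ⟨hk1, hk2⟩ := hk
    by_cases h1 : k - a ≤ m
    · have := hS3 U hU _ hpU _ hqU (k - a) ⟨by omega, h1⟩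
      simpa [hcomp] using this
    by_cases h2 : b - k ≤ m
    · have := hS3 V hV _ hpV _ hqV (k - b) ⟨by omega, by omega⟩
      simpa [hcomp] using this
    refine hm _ _ fun j hj => ?_
    rw [hcomp, hcomp]
    exact hA p hp q hq _ ⟨by have := hj.1; omega, by have := hj.2; omega⟩

/-- Dynamical distance over a time set. -/
noncomputable def dT (f : Equiv.Perm M) (T : Set ℤ) (x y : M) : ℝ :=
  sSup {r : ℝ | ∃ k ∈ T, r = dist ((f ^ k) x) ((f ^ k) y)}

lemma dFn_eq (f : Equiv.Perm M) (n : ℕ) : dFn f n = dT f (Set.Icc (-(n : ℤ)) n) := by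
  funext x y
  simp only [dFn, dT, abs_le, Set.mem_Icc]

lemma dPlusn_eq (f : Equiv.Perm M) (n : ℕ) : dPlusn f n = dT f (Set.Icc 0 (n : ℤ)) := by
  funext x y
  simp only [dPlusn, dT]
  congr 1
  ext r
  constructor
  · rintro ⟨k, hk, rfl⟩
    exact ⟨k, ⟨by omega, by omega⟩, by rw [zpow_natCast]⟩
  · rintro ⟨k, ⟨h0, hk⟩, rfl⟩
    obtain ⟨j, rfl⟩ := Int.eq_ofNat_of_zero_le h0
    exact ⟨j, by omega, by rw [zpow_natCast]⟩

lemma exists_bdd : ∃ D : ℝ, 0 ≤ D ∧ ∀ x y : M, dist x y ≤ D :=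
  ⟨Metric.diam (Set.univ : Set M), Metric.diam_nonneg, fun _ _ =>
    Metric.dist_le_diam_of_mem isCompact_univ.isBounded trivial trivial⟩

lemma small_of_rdiam (f : Equiv.Perm M) (T : Set ℤ) (ξ : ℝ) (A : Set M)
    (h : rdiam (dT f T) A < ξ) : SmallOn f T ξ A := by
  obtain ⟨D, hD0, hD⟩ := exists_bdd (M := M)
  intro p hp q hq k hk
  have h1 : dist ((f ^ k) p) ((f ^ k) q) ≤ dT f T p q :=
    le_csSup ⟨D, by rintro _ ⟨j, _, rfl⟩; exact hD _ _⟩ ⟨k, hk, rfl⟩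
  have h2 : dT f T p q ≤ rdiam (dT f T) A := by
    refine le_csSup ⟨D, ?_⟩ ⟨p, hp, q, hq, rfl⟩
    rintro _ ⟨a, _, b, _, rfl⟩
    refine Real.sSup_le ?_ hD0
    rintro _ ⟨j, _, rfl⟩
    exact hD _ _
  linarith

lemma rdiam_of_small (f : Equiv.Perm M) (T : Set ℤ) (ξ : ℝ) (hξ : 0 < ξ) (A : Set M)
    (h : SmallOn f T (ξ / 2) A) : rdiam (dT f T) A < ξ := by
  refine lt_of_le_of_lt (?_ : _ ≤ ξ / 2) (by linarith)
  refine Real.sSup_le ?_ (by linarith)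
  rintro _ ⟨p, hp, q, hq, rfl⟩
  refine Real.sSup_le ?_ (by linarith)
  rintro _ ⟨k, hk, rfl⟩
  exact h p hp q hq k hk

lemma covN_le_of (f : Equiv.Perm M) (T : Set ℤ) (ξ : ℝ) (hξ : 0 < ξ) (X : Set M) (b : ℝ)
    (h : CoverBy (SmallOn f T (ξ / 2)) X b) : (covN X (dT f T) ξ : ℝ) ≤ b := by
  obtain ⟨S, h1, h2, h3⟩ := h
  refine le_trans ?_ h1
  have : covN X (dT f T) ξ ≤ S.card := by
    refine Nat.sInf_le ⟨fun i => (S.equivFin.symm i : Set M), ?_, ?_⟩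
    · intro x hx
      obtain ⟨A, hA, hxA⟩ := h2 x hx
      exact Set.mem_iUnion.2 ⟨S.equivFin ⟨A, hA⟩, by simpa using hxA⟩
    · intro i
      exact rdiam_of_small f T ξ hξ _ (h3 _ (S.equivFin.symm i).2)
  exact_mod_cast this

lemma covN_nonempty (f : Equiv.Perm M) (hf : Continuous f) (hf' : Continuous f.symm)
    (T : Set ℤ) (hT : T.Finite) (ξ : ℝ) (hξ : 0 < ξ) (X : Set M) :
    covN X (dT f T) ξ ∈
      {n : ℕ | ∃ U : Fin n → Set M, X ⊆ (⋃ i, U i) ∧ ∀ i, rdiam (dT f T) (U i) < ξ} := by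
  apply Nat.sInf_mem
  obtain ⟨b, _, S, h1, h2, h3⟩ := exists_cov f hf hf' T hT (ξ / 2) (by linarith)
  refine ⟨S.card, fun i => (S.equivFin.symm i : Set M), ?_, ?_⟩
  · intro x hx
    obtain ⟨A, hA, hxA⟩ := h2 x trivial
    exact Set.mem_iUnion.2 ⟨S.equivFin ⟨A, hA⟩, by simpa using hxA⟩
  · intro i
    exact rdiam_of_small f T ξ hξ _ (h3 _ (S.equivFin.symm i).2)

lemma cov_covN (f : Equiv.Perm M) (hf : Continuous f) (hf' : Continuous f.symm)
    (T : Set ℤ) (hT : T.Finite) (ξ : ℝ) (hξ : 0 < ξ) (X : Set M) :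
    CoverBy (SmallOn f T ξ) X (covN X (dT f T) ξ) := by
  classical
  obtain ⟨U, hU, hr⟩ := covN_nonempty f hf hf' T hT ξ hξ X
  refine ⟨Finset.univ.image U, ?_, ?_, ?_⟩
  · have : (Finset.univ.image U).card ≤ covN X (dT f T) ξ := by
      simpa using Finset.card_image_le (s := Finset.univ) (f := U)
    exact_mod_cast this
  · intro x hx
    obtain ⟨i, hi⟩ := Set.mem_iUnion.1 (hU hx)
    exact ⟨U i, Finset.mem_image_of_mem U (Finset.mem_univ i), hi⟩
  · intro A hA
    obtain ⟨i, _, rfl⟩ := Finset.mem_image.1 hA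
    exact small_of_rdiam f T ξ _ (hr i)

lemma one_le_covN (f : Equiv.Perm M) (hf : Continuous f) (hf' : Continuous f.symm)
    (T : Set ℤ) (hT : T.Finite) (ξ : ℝ) (hξ : 0 < ξ) (X : Set M) (hX : X.Nonempty) :
    (1 : ℝ) ≤ covN X (dT f T) ξ := by
  obtain ⟨U, hU, -⟩ := covN_nonempty f hf hf' T hT ξ hξ X
  obtain ⟨x, hx⟩ := hX
  obtain ⟨i, -⟩ := Set.mem_iUnion.1 (hU hx)
  have := i.pos
  exact_mod_cast this

lemma small_shift (f : Equiv.Perm M) (a b s : ℤ) (η : ℝ) (A : Set M)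
    (h : SmallOn f (Set.Icc a b) η A) :
    SmallOn f (Set.Icc (a + s) (b + s)) η ((f ^ s : Equiv.Perm M) ⁻¹' A) := by
  intro p hp q hq k hk
  have := h _ hp _ hq (k - s) ⟨by have := hk.1; omega, by have := hk.2; omega⟩
  rw [← Equiv.Perm.mul_apply, ← Equiv.Perm.mul_apply, ← zpow_add] at this
  simpa using this

lemma cov_shift (f : Equiv.Perm M) (a b s : ℤ) (η : ℝ) (X : Set M) (c : ℝ)
    (h : CoverBy (SmallOn f (Set.Icc a b) η) X c) :
    CoverBy (SmallOn f (Set.Icc (a + s) (b + s)) η) ((f ^ s : Equiv.Perm M) ⁻¹' X) c :=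
  h.map _ (fun A => small_shift f a b s η A) fun y hy => ⟨(f ^ s) y, hy, fun _ h => h⟩

lemma SmallOn.anti {f : Equiv.Perm M} {T T' : Set ℤ} {η η' : ℝ} {A B : Set M} (h : SmallOn f T η A)
    (hT : T' ⊆ T) (hη : η ≤ η') (hB : B ⊆ A) : SmallOn f T' η' B :=
  fun p hp q hq k hk => (h p (hB hp) q (hB hq) k (hT hk)).trans hη

end

section
variable {M : Type*} [MetricSpace M] [CompactSpace M]

lemma symm_pow_eq (f : Equiv.Perm M) (n : ℕ) : f.symm ^ n = f ^ (-(n : ℤ)) := by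
  rw [zpow_neg, zpow_natCast, ← inv_pow]
  rfl

lemma mem_Wu_self (f : Equiv.Perm M) (ξ : ℝ) (hξ : 0 < ξ) (x : M) : x ∈ Wu f ξ x := by
  intro n
  rw [dist_self]
  exact hξ.le

/-- Two-sided versus one-sided covers of local unstable sets. -/
lemma Wu_compare (f : Equiv.Perm M) (hf : Continuous f) (hf' : Continuous f.symm)
    (ξ : ℝ) (hξ : 0 < ξ)
    (hexp : ∀ x y : M, x ≠ y → ∃ n : ℤ, 3 * ξ < dist ((f ^ n) x) ((f ^ n) y)) :
    ∃ K : ℝ, 0 < K ∧ ∀ (n : ℕ) (x : M),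
      (covN (Wu f ξ x) (dFn f n) ξ : ℝ) ≤ K * covN (Wu f ξ x) (dPlusn f n) ξ ∧
      (covN (Wu f ξ x) (dPlusn f n) ξ : ℝ) ≤ K * covN (Wu f ξ x) (dFn f n) ξ := by
  obtain ⟨K, hK, hR⟩ := refine_cov f hf hf' (3 * ξ) hexp (ξ / 2) (by linarith)
  refine ⟨K, hK, fun n x => ⟨?_, ?_⟩⟩
  · rw [dFn_eq, dPlusn_eq, mul_comm]
    apply covN_le_of f _ ξ hξ
    have h1 := cov_covN f hf hf' (Set.Icc 0 (n : ℤ)) (Set.finite_Icc _ _) ξ hξ (Wu f ξ x)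
    have h2 : CoverBy (SmallOn f (Set.Icc (-(n : ℤ)) n) (3 * ξ)) (Wu f ξ x)
        (covN (Wu f ξ x) (dT f (Set.Icc 0 (n : ℤ))) ξ) := by
      refine h1.map (fun A => A ∩ Wu f ξ x) ?_ fun y hy => ⟨y, hy, fun A hA => ⟨hA, hy⟩⟩
      rintro A hA p ⟨hp, hp'⟩ q ⟨hq, hq'⟩ k hk
      by_cases h0 : 0 ≤ k
      · have := hA p hp q hq k ⟨h0, hk.2⟩
        linarith
      · obtain ⟨j, rfl⟩ : ∃ j : ℕ, k = -(j : ℤ) := ⟨k.natAbs, by omega⟩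
        have h3 := hp' j
        have h4 := hq' j
        rw [symm_pow_eq] at h3 h4
        have := dist_triangle_left ((f ^ (-(j : ℤ))) p) ((f ^ (-(j : ℤ))) q)
          ((f ^ (-(j : ℤ))) x)
        linarith
    exact h2.comp hK.le fun A hA => hR _ _ A hA
  · rw [dFn_eq, dPlusn_eq, mul_comm]
    apply covN_le_of f _ ξ hξ
    refine (cov_covN f hf hf' (Set.Icc (-(n : ℤ)) n) (Set.finite_Icc _ _) ξ hξ
      (Wu f ξ x)).comp hK.le fun A hA => hR _ _ A (hA.anti ?_ (by linarith) subset_rfl)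
    exact Set.Icc_subset_Icc (by omega) le_rfl

/-- Main step: some local unstable set has full exponential growth. -/
lemma exists_full (f : Equiv.Perm M) (hf : Continuous f) (hf' : Continuous f.symm)
    (ξ : ℝ) (hξ : 0 < ξ)
    (hexp : ∀ x y : M, x ≠ y → ∃ n : ℤ, 3 * ξ < dist ((f ^ n) x) ((f ^ n) y))
    (hcc : ∀ ε > (0 : ℝ), ∃ δ > (0 : ℝ), ∀ x y : M, dist x y < δ →
      (Ws f ε x ∩ Wu f ε y).Nonempty)
    (E : ℝ)
    (hE : Tendsto (fun n : ℕ =>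
        Real.log ((covN (Set.univ : Set M) (dFn f n) ξ : ℕ) : ℝ) / (n : ℝ)) atTop (𝓝 E))
    (x₀ : M) :
    ∃ c : ℝ, 0 < c ∧ ∃ x : M, ∀ n : ℕ, 1 ≤ n →
      c * Real.exp (E / 2 * n) ≤ covN (Wu f ξ x) (dPlusn f n) ξ := by
  classical
  obtain ⟨δ, hδ, hprod⟩ := hcc ξ hξ
  obtain ⟨η, hη, hη1, hη2⟩ : ∃ η : ℝ, 0 < η ∧ η ≤ ξ / 2 ∧ η < δ / 2 :=
    ⟨min (ξ / 2) (δ / 4), by positivity, min_le_left _ _,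
      lt_of_le_of_lt (min_le_right _ _) (by linarith)⟩
  obtain ⟨K, hK, hR⟩ := refine_cov f hf hf' (3 * ξ) hexp η hη
  -- balls are covered by as many sets as local unstable sets
  have hball : ∀ (x : M) (n : ℕ), CoverBy (SmallOn f (Set.Icc 0 (n : ℤ)) η) (Metric.ball x δ)
      (covN (Wu f ξ x) (dPlusn f n) ξ * K) := by
    intro x n
    rw [dPlusn_eq]
    have h1 := cov_covN f hf hf' (Set.Icc 0 (n : ℤ)) (Set.finite_Icc _ _) ξ hξ (Wu f ξ x)
    have h2 : CoverBy (SmallOn f (Set.Icc 0 (n : ℤ)) (3 * ξ)) (Metric.ball x δ)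
        (covN (Wu f ξ x) (dT f (Set.Icc 0 (n : ℤ))) ξ) := by
      refine h1.map (fun A => {y | ∃ z ∈ A, z ∈ Ws f ξ y}) ?_ ?_
      · rintro A hA p ⟨z, hz, hzp⟩ q ⟨w, hw, hwq⟩ k hk
        have h3 := hA z hz w hw k hk
        obtain ⟨j, rfl⟩ := Int.eq_ofNat_of_zero_le hk.1
        have h4 := hzp j
        have h5 := hwq j
        rw [zpow_natCast] at h3 ⊢
        have h6 := dist_triangle4_right ((f ^ j) p) ((f ^ j) q) ((f ^ j) z) ((f ^ j) w)
        linarith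
      · intro y hy
        obtain ⟨z, hz1, hz2⟩ := hprod y x hy
        exact ⟨z, hz2, fun A hA => ⟨z, hA, hz1⟩⟩
    exact h2.comp hK.le fun A hA => hR _ _ A hA
  refine ⟨Real.exp (-1) / K, by positivity, ?_⟩
  by_contra hcon
  push Not at hcon
  choose ν hν1 hν2 using hcon
  obtain ⟨t, ht⟩ := isCompact_univ.elim_finite_subcover (fun x : M => Metric.ball x (δ / 2))
    (fun _ => Metric.isOpen_ball)
    (fun p _ => Set.mem_iUnion.2 ⟨p, Metric.mem_ball_self (by linarith)⟩)
  have ht' : ∀ y : M, ∃ x ∈ t, dist y x < δ / 2 := by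
    intro y
    obtain ⟨x, hx, hxy⟩ := Set.mem_iUnion₂.1 (ht (Set.mem_univ y))
    exact ⟨x, hx, hxy⟩
  set N : ℕ := t.sup ν with hN
  have hνN : ∀ x ∈ t, ν x ≤ N := fun x hx => Finset.le_sup hx
  have hNpos : 1 ≤ N := by
    obtain ⟨x, hx, _⟩ := ht' x₀
    exact (hν1 x).trans (hνN x hx)
  have hNR : (0 : ℝ) < N := by exact_mod_cast hNpos
  set a : ℝ := E / 2 - 1 / N with ha
  have hstep : ∀ x ∈ t, CoverBy (SmallOn f (Set.Icc 0 (ν x : ℤ)) η) (Metric.ball x δ)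
      (Real.exp (a * ν x)) := by
    intro x hx
    refine (hball x (ν x)).mono ?_
    have h1 : (covN (Wu f ξ x) (dPlusn f (ν x)) ξ : ℝ) * K ≤
        Real.exp (-1) / K * Real.exp (E / 2 * ν x) * K := by
      gcongr
      exact (hν2 x).le
    have h2 : Real.exp (-1) / K * Real.exp (E / 2 * ν x) * K = Real.exp (-1 + E / 2 * ν x) := by
      rw [Real.exp_add]
      field_simp
    refine h1.trans (h2.le.trans (Real.exp_le_exp.2 ?_))
    have h3 : (ν x : ℝ) ≤ N := by exact_mod_cast hνN x hx
    have h4 : 1 / (N : ℝ) * ν x ≤ 1 := by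
      rw [one_div, inv_mul_le_iff₀ hNR]
      linarith
    rw [ha, sub_mul]
    linarith
  choose β hβ0 hβ using fun n : ℕ =>
    exists_cov f hf hf' (Set.Icc 0 (n : ℤ)) (Set.finite_Icc _ _) η hη
  obtain ⟨D, hD0, hD⟩ : ∃ D : ℝ, 0 < D ∧ ∀ n < N, β n ≤ D * Real.exp (a * n) := by
    refine ⟨1 + ∑ n ∈ Finset.range N, β n / Real.exp (a * n), ?_, ?_⟩
    · have : 0 ≤ ∑ n ∈ Finset.range N, β n / Real.exp (a * n) :=
        Finset.sum_nonneg fun n _ => div_nonneg (hβ0 n) (Real.exp_pos _).le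
      linarith
    · intro n hn
      rw [← div_le_iff₀ (Real.exp_pos _)]
      have := Finset.single_le_sum (f := fun n : ℕ => β n / Real.exp (a * n))
        (fun n _ => div_nonneg (hβ0 n) (Real.exp_pos _).le) (Finset.mem_range.2 hn)
      linarith
  have hind : ∀ n : ℕ, ∀ x ∈ t, CoverBy (SmallOn f (Set.Icc 0 (n : ℤ)) η) (Metric.ball x δ)
      (D * Real.exp (a * n)) := by
    intro n
    induction n using Nat.strong_induction_on with
    | _ n ih =>
      intro x hx
      by_cases hnN : n < N
      · exact ((hβ n).mono (hD n hnN)).map id (fun _ h => h) fun y _ => ⟨y, trivial, fun _ h => h⟩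
      push Not at hnN
      have hle : ν x ≤ n := (hνN x hx).trans hnN
      have key := (hstep x hx).comp (Q := SmallOn f (Set.Icc 0 (n : ℤ)) η)
        (c := D * Real.exp (a * (n - ν x : ℕ))) (by positivity) ?_
      · refine key.mono (le_of_eq ?_)
        rw [mul_left_comm, ← Real.exp_add]
        congr 2
        push_cast [hle]
        ring
      intro A hA
      rcases A.eq_empty_or_nonempty with rfl | ⟨p, hp⟩
      · exact ⟨∅, by simp; positivity, by simp, by simp⟩
      obtain ⟨y, hy, hpy⟩ := ht' ((f ^ (ν x : ℤ)) p)
      have h1 := cov_shift f _ _ (ν x : ℤ) η _ _ (ih (n - ν x) (by have := hν1 x; omega) y hy)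
      refine h1.map (fun B => A ∩ B) ?_ ?_
      · rintro B hB u ⟨hu, hu'⟩ v ⟨hv, hv'⟩ k hk
        by_cases hkx : k ≤ ν x
        · exact hA u hu v hv k ⟨hk.1, hkx⟩
        · exact hB u hu' v hv' k ⟨by omega, by have := hk.2; omega⟩
      · intro q hq
        refine ⟨q, ?_, fun B hB => ⟨hq, hB⟩⟩
        have h2 := hA q hq p hp (ν x) ⟨by omega, le_rfl⟩
        have h3 := dist_triangle ((f ^ (ν x : ℤ)) q) ((f ^ (ν x : ℤ)) p) y
        simp only [Set.mem_preimage, Metric.mem_ball]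
        linarith
  -- cover of the whole space
  have huniv : ∀ n : ℕ, CoverBy (SmallOn f (Set.Icc 0 (n : ℤ)) η) Set.univ
      (t.card * (D * Real.exp (a * n))) := by
    intro n
    have h0 : CoverBy (fun A : Set M => ∃ x ∈ t, A = Metric.ball x δ) Set.univ (t.card : ℝ) := by
      refine ⟨t.image fun x => Metric.ball x δ, by exact_mod_cast Finset.card_image_le, ?_, ?_⟩
      · intro y _
        obtain ⟨x, hx, hyx⟩ := ht' y
        exact ⟨_, Finset.mem_image_of_mem _ hx, by simp only [Metric.mem_ball]; linarith⟩
      · intro A hA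
        obtain ⟨x, hx, rfl⟩ := Finset.mem_image.1 hA
        exact ⟨x, hx, rfl⟩
    refine h0.comp (by positivity) ?_
    rintro A ⟨x, hx, rfl⟩
    exact hind n x hx
  have htpos : (0 : ℝ) < t.card := by
    obtain ⟨x, hx, _⟩ := ht' x₀
    exact_mod_cast Finset.card_pos.2 ⟨x, hx⟩
  have hF : ∀ n : ℕ, (covN (Set.univ : Set M) (dFn f n) ξ : ℝ) ≤
      t.card * D * Real.exp (2 * a * n) := by
    intro n
    rw [dFn_eq]
    apply covN_le_of f _ ξ hξ
    have h1 := cov_shift f _ _ (-(n : ℤ)) η _ _ (huniv (2 * n))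
    refine (h1.map id (Q := SmallOn f (Set.Icc (-(n : ℤ)) n) (ξ / 2)) (Y := Set.univ) ?_
      fun y _ => ⟨y, trivial, fun _ h => h⟩).mono (le_of_eq ?_)
    · intro A hA
      refine hA.anti (Set.Icc_subset_Icc ?_ ?_) hη1 subset_rfl
      · omega
      · push_cast; omega
    · push_cast
      rw [mul_assoc]
      congr 3
      ring
  have hlog : ∀ n : ℕ, 1 ≤ n → Real.log (covN (Set.univ : Set M) (dFn f n) ξ : ℝ) / n ≤
      Real.log (t.card * D) / n + 2 * a := by
    intro n hn
    have hn' : (0 : ℝ) < n := by exact_mod_cast hn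
    have h1 : (1 : ℝ) ≤ covN (Set.univ : Set M) (dFn f n) ξ := by
      rw [dFn_eq]
      exact one_le_covN f hf hf' _ (Set.finite_Icc _ _) ξ hξ _ ⟨x₀, trivial⟩
    have h2 := Real.log_le_log (by linarith) (hF n)
    rw [Real.log_mul (by positivity) (by positivity), Real.log_exp] at h2
    rw [div_add' _ _ _ hn'.ne']
    gcongr
  have hlim : Tendsto (fun n : ℕ => Real.log (t.card * D) / (n : ℝ) + 2 * a) atTop
      (𝓝 (0 + 2 * a)) :=
    (tendsto_const_div_atTop_nhds_zero_nat _).add tendsto_const_nhds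
  have hfin : E ≤ 0 + 2 * a :=
    le_of_tendsto_of_tendsto hE hlim (eventually_atTop.2 ⟨1, hlog⟩)
  have : 0 < 1 / (N : ℝ) := by positivity
  rw [ha] at hfin
  linarith

/-- One-sided counts are controlled by the counts of the whole space. -/
lemma upper_bound (f : Equiv.Perm M) (hf : Continuous f) (hf' : Continuous f.symm)
    (ξ : ℝ) (hξ : 0 < ξ)
    (hexp : ∀ x y : M, x ≠ y → ∃ n : ℤ, 3 * ξ < dist ((f ^ n) x) ((f ^ n) y)) :
    ∃ K : ℝ, 0 < K ∧ ∀ (n : ℕ) (X : Set M),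
      (covN X (dPlusn f n) ξ : ℝ) ≤ K * covN (Set.univ : Set M) (dFn f ((n + 1) / 2)) ξ := by
  obtain ⟨K, hK, hR⟩ := refine_cov f hf hf' (3 * ξ) hexp (ξ / 2) (by linarith)
  refine ⟨K, hK, fun n X => ?_⟩
  rw [dFn_eq, dPlusn_eq, mul_comm]
  apply covN_le_of f _ ξ hξ
  set m := (n + 1) / 2 with hm
  have h1 := cov_shift f _ _ (m : ℤ) ξ _ _
    (cov_covN f hf hf' (Set.Icc (-(m : ℤ)) m) (Set.finite_Icc _ _) ξ hξ Set.univ)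
  have h2 := h1.map id (Q := SmallOn f (Set.Icc 0 (n : ℤ)) (3 * ξ)) (Y := X) (fun A hA =>
    hA.anti (Set.Icc_subset_Icc (by omega) (by omega)) (by linarith) subset_rfl)
    fun y _ => ⟨y, trivial, fun _ h => h⟩
  exact h2.comp hK.le fun A hA => hR _ _ A hA

lemma tendsto_of_compare (u v : ℕ → ℝ) (K E : ℝ) (hK : 0 < K) (hu : ∀ n, 1 ≤ u n)
    (hv : ∀ n, 1 ≤ v n) (h1 : ∀ n, u n ≤ K * v n) (h2 : ∀ n, v n ≤ K * u n)
    (h : Tendsto (fun n : ℕ => Real.log (u n) / (n : ℝ)) atTop (𝓝 E)) :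
    Tendsto (fun n : ℕ => Real.log (v n) / (n : ℝ)) atTop (𝓝 E) := by
  have hc : Tendsto (fun n : ℕ => Real.log K / (n : ℝ)) atTop (𝓝 0) :=
    tendsto_const_div_atTop_nhds_zero_nat _
  have ha := h.add hc
  have hb := h.sub hc
  rw [add_zero] at ha
  rw [sub_zero] at hb
  have key : ∀ x y : ℝ, 1 ≤ x → 1 ≤ y → x ≤ K * y → Real.log x ≤ Real.log K + Real.log y := by
    intro x y hx hy hxy
    rw [← Real.log_mul hK.ne' (by linarith)]
    exact Real.log_le_log (by linarith) hxy
  refine tendsto_of_tendsto_of_tendsto_of_le_of_le hb ha ?_ ?_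
  · intro n
    have := key _ _ (hu n) (hv n) (h1 n)
    simp only [← sub_div]
    gcongr
    linarith
  · intro n
    have := key _ _ (hv n) (hu n) (h2 n)
    simp only [← add_div]
    gcongr
    linarith

lemma half_tendsto : Tendsto (fun n : ℕ => (((n + 1) / 2 : ℕ) : ℝ) / (n : ℝ)) atTop
    (𝓝 (1 / 2)) := by
  have hc : Tendsto (fun n : ℕ => 1 / 2 + (1 / 2) / (n : ℝ)) atTop (𝓝 (1 / 2 + 0)) :=
    tendsto_const_nhds.add (tendsto_const_div_atTop_nhds_zero_nat _)
  rw [add_zero] at hc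
  refine tendsto_of_tendsto_of_tendsto_of_le_of_le' tendsto_const_nhds hc ?_ ?_
  · refine eventually_atTop.2 ⟨1, fun n hn => ?_⟩
    have hn' : (0 : ℝ) < n := by exact_mod_cast hn
    rw [le_div_iff₀ hn']
    have : (n : ℝ) ≤ 2 * ((n + 1) / 2 : ℕ) := by
      exact_mod_cast (by omega : n ≤ 2 * ((n + 1) / 2))
    linarith
  · refine eventually_atTop.2 ⟨1, fun n hn => ?_⟩
    have hn' : (0 : ℝ) < n := by exact_mod_cast hn
    rw [add_div' _ _ _ hn'.ne']
    gcongr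
    have : 2 * (((n + 1) / 2 : ℕ) : ℝ) ≤ n + 1 := by
      exact_mod_cast (by omega : 2 * ((n + 1) / 2) ≤ n + 1)
    linarith

lemma half_main (f : Equiv.Perm M) (hf : Continuous f) (hf' : Continuous f.symm)
    (ξ : ℝ) (hξ : 0 < ξ)
    (hexp : ∀ x y : M, x ≠ y → ∃ n : ℤ, 3 * ξ < dist ((f ^ n) x) ((f ^ n) y))
    (hcc : ∀ ε > (0 : ℝ), ∃ δ > (0 : ℝ), ∀ x y : M, dist x y < δ →
      (Ws f ε x ∩ Wu f ε y).Nonempty)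
    (hhom : ∀ x y : M, ∀ E : ℝ,
        Tendsto (fun n : ℕ =>
          Real.log ((covN (Wu f ξ x) (dFn f n) ξ : ℕ) : ℝ) / (n : ℝ)) atTop (𝓝 E) ↔
        Tendsto (fun n : ℕ =>
          Real.log ((covN (Wu f ξ y) (dFn f n) ξ : ℕ) : ℝ) / (n : ℝ)) atTop (𝓝 E))
    (E : ℝ)
    (hE : Tendsto (fun n : ℕ =>
        Real.log ((covN (Set.univ : Set M) (dFn f n) ξ : ℕ) : ℝ) / (n : ℝ)) atTop (𝓝 E))
    (y : M) :
    Tendsto (fun n : ℕ =>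
      Real.log ((covN (Wu f ξ y) (dPlusn f n) ξ : ℕ) : ℝ) / (n : ℝ)) atTop (𝓝 (E / 2)) := by
  obtain ⟨c, hc, x, hx⟩ := exists_full f hf hf' ξ hξ hexp hcc E hE y
  obtain ⟨K, hK, hup⟩ := upper_bound f hf hf' ξ hξ hexp
  obtain ⟨L, hL, hcmp⟩ := Wu_compare f hf hf' ξ hξ hexp
  have hP1 : ∀ (z : M) (n : ℕ), (1 : ℝ) ≤ covN (Wu f ξ z) (dPlusn f n) ξ := by
    intro z n
    rw [dPlusn_eq]
    exact one_le_covN f hf hf' _ (Set.finite_Icc _ _) ξ hξ _ ⟨z, mem_Wu_self f ξ hξ z⟩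
  have hF1 : ∀ (z : M) (n : ℕ), (1 : ℝ) ≤ covN (Wu f ξ z) (dFn f n) ξ := by
    intro z n
    rw [dFn_eq]
    exact one_le_covN f hf hf' _ (Set.finite_Icc _ _) ξ hξ _ ⟨z, mem_Wu_self f ξ hξ z⟩
  have hM1 : ∀ (n : ℕ), (1 : ℝ) ≤ covN (Set.univ : Set M) (dFn f n) ξ := by
    intro n
    rw [dFn_eq]
    exact one_le_covN f hf hf' _ (Set.finite_Icc _ _) ξ hξ _ ⟨y, trivial⟩
  have hxlim : Tendsto (fun n : ℕ =>
      Real.log ((covN (Wu f ξ x) (dPlusn f n) ξ : ℕ) : ℝ) / (n : ℝ)) atTop (𝓝 (E / 2)) := by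
    have hlo : Tendsto (fun n : ℕ => Real.log c / (n : ℝ) + E / 2) atTop (𝓝 (0 + E / 2)) :=
      (tendsto_const_div_atTop_nhds_zero_nat _).add tendsto_const_nhds
    rw [zero_add] at hlo
    have hm : Tendsto (fun n : ℕ => (n + 1) / 2) atTop atTop :=
      tendsto_atTop.2 fun b => eventually_atTop.2 ⟨2 * b, fun n hn => by omega⟩
    have hhi : Tendsto (fun n : ℕ => Real.log K / (n : ℝ) +
        Real.log ((covN (Set.univ : Set M) (dFn f ((n + 1) / 2)) ξ : ℕ) : ℝ) /
          (((n + 1) / 2 : ℕ) : ℝ) * ((((n + 1) / 2 : ℕ) : ℝ) / (n : ℝ))) atTop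
        (𝓝 (0 + E * (1 / 2))) :=
      (tendsto_const_div_atTop_nhds_zero_nat _).add ((hE.comp hm).mul half_tendsto)
    rw [show 0 + E * (1 / 2) = E / 2 by ring] at hhi
    refine tendsto_of_tendsto_of_tendsto_of_le_of_le' hlo hhi ?_ ?_
    · refine eventually_atTop.2 ⟨1, fun n hn => ?_⟩
      have hn' : (0 : ℝ) < n := by exact_mod_cast hn
      have h2 := Real.log_le_log (by positivity) (hx n hn)
      rw [Real.log_mul (by positivity) (by positivity), Real.log_exp] at h2
      rw [div_add' _ _ _ hn'.ne']
      gcongr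
    · refine eventually_atTop.2 ⟨1, fun n hn => ?_⟩
      have hn' : (0 : ℝ) < n := by exact_mod_cast hn
      have hm' : (((n + 1) / 2 : ℕ) : ℝ) ≠ 0 := by
        exact_mod_cast (by omega : (n + 1) / 2 ≠ 0)
      have h2 := Real.log_le_log (by linarith [hP1 x n]) (hup n (Wu f ξ x))
      rw [Real.log_mul hK.ne' (by linarith [hM1 ((n + 1) / 2)])] at h2
      rw [div_mul_div_cancel₀ hm', ← add_div]
      gcongr
  have h1 := tendsto_of_compare (fun n => (covN (Wu f ξ x) (dPlusn f n) ξ : ℝ))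
    (fun n => (covN (Wu f ξ x) (dFn f n) ξ : ℝ)) L (E / 2) hL (hP1 x) (hF1 x)
    (fun n => (hcmp n x).2) (fun n => (hcmp n x).1) hxlim
  have h2 := (hhom x y (E / 2)).1 h1
  exact tendsto_of_compare (fun n => (covN (Wu f ξ y) (dFn f n) ξ : ℝ))
    (fun n => (covN (Wu f ξ y) (dPlusn f n) ξ : ℝ)) L (E / 2) hL (hF1 y) (hP1 y)
    (fun n => (hcmp n y).1) (fun n => (hcmp n y).2) h2

lemma symm_zpow_eq (f : Equiv.Perm M) (k : ℤ) : f.symm ^ k = f ^ (-k) := by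
  rw [zpow_neg, ← inv_zpow]
  rfl

lemma dFn_symm (f : Equiv.Perm M) (n : ℕ) : dFn f.symm n = dFn f n := by
  funext x y
  unfold dFn
  congr 1
  ext r
  constructor
  · rintro ⟨k, hk, rfl⟩
    exact ⟨-k, by rwa [abs_neg], by rw [symm_zpow_eq]⟩
  · rintro ⟨k, hk, rfl⟩
    exact ⟨-k, by rwa [abs_neg], by rw [symm_zpow_eq, neg_neg]⟩

end

theorem stmt_15 {M : Type*} [MetricSpace M] [CompactSpace M]
    (f : Equiv.Perm M) (hf : Continuous f) (hf' : Continuous f.symm)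
    (ξ lam : ℝ) (hξ : 0 < ξ) (hlam : 1 < lam)
    (hexp : ∀ x y : M, x ≠ y → ∃ n : ℤ, 3 * ξ < dist ((f ^ n) x) ((f ^ n) y))
    (hss : ∀ p q : M, dist p q ≤ ξ →
      max (dist (f p) (f q)) (dist (f.symm p) (f.symm q)) = lam * dist p q)
    (hcc : ∀ ε > (0 : ℝ), ∃ δ > (0 : ℝ), ∀ x y : M, dist x y < δ → (Ws f ε x ∩ Wu f ε y).Nonempty)
    (hhom : ∀ x y : M,
      (∀ E : ℝ,
        Tendsto (fun n : ℕ =>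
          Real.log ((covN (Wu f ξ x) (dFn f n) ξ : ℕ) : ℝ) / (n : ℝ)) atTop (𝓝 E) ↔
        Tendsto (fun n : ℕ =>
          Real.log ((covN (Wu f ξ y) (dFn f n) ξ : ℕ) : ℝ) / (n : ℝ)) atTop (𝓝 E)) ∧
      (∀ E : ℝ,
        Tendsto (fun n : ℕ =>
          Real.log ((covN (Ws f ξ x) (dFn f n) ξ : ℕ) : ℝ) / (n : ℝ)) atTop (𝓝 E) ↔
        Tendsto (fun n : ℕ =>
          Real.log ((covN (Ws f ξ y) (dFn f n) ξ : ℕ) : ℝ) / (n : ℝ)) atTop (𝓝 E)))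
    (E : ℝ)
    (hE : Tendsto (fun n : ℕ =>
        Real.log ((covN (Set.univ : Set M) (dFn f n) ξ : ℕ) : ℝ) / (n : ℝ)) atTop (𝓝 E)) :
    ∀ x : M,
      Tendsto (fun n : ℕ =>
        Real.log ((covN (Wu f ξ x) (dPlusn f n) ξ : ℕ) : ℝ) / (n : ℝ)) atTop (𝓝 (E / 2)) ∧
      Tendsto (fun n : ℕ =>
        Real.log ((covN (Ws f ξ x) (dMinusn f n) ξ : ℕ) : ℝ) / (n : ℝ)) atTop (𝓝 (E / 2)) := by
  intro x
  refine ⟨half_main f hf hf' ξ hξ hexp hcc (fun x y => (hhom x y).1) E hE x, ?_⟩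
  refine half_main f.symm hf' hf ξ hξ ?_ ?_ ?_ E ?_ x
  · intro p q hpq
    obtain ⟨n, hn⟩ := hexp p q hpq
    exact ⟨-n, by rwa [symm_zpow_eq, neg_neg]⟩
  · intro ε hε
    obtain ⟨δ, hδ, h⟩ := hcc ε hε
    refine ⟨δ, hδ, fun p q hpq => ?_⟩
    obtain ⟨z, hz1, hz2⟩ := h q p (by rwa [dist_comm])
    exact ⟨z, hz2, hz1⟩
  · intro p q
    simp only [dFn_symm]
    exact (hhom p q).2
  · simp only [dFn_symm]
    exact hE
end

section
/- Let h : (X₁, ρ₁) → (X₂, ρ₂) be a pseudo isometry between compact metric spaces. Then for every d > 0 the d-dimensional Hausdorff measures agree: μ^d(X₁, ρ₁) = μ^d(X₂, ρ₂). -/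
open Filter Topology

open MeasureTheory

lemma hm_le_of_local_lip {X Y : Type*}
    [MetricSpace X] [CompactSpace X] [MeasurableSpace X] [BorelSpace X]
    [MetricSpace Y] [MeasurableSpace Y] [BorelSpace Y]
    (f : X → Y) (hf : Function.Surjective f) (K : NNReal) (δ : ℝ) (hδ : 0 < δ)
    (hK : ∀ x y, dist x y < δ → dist (f x) (f y) ≤ K * dist x y) (d : ℝ) (hd : 0 < d) :
    μH[d] (Set.univ : Set Y) ≤ (K : ENNReal) ^ d * μH[d] (Set.univ : Set X) := by
  rcases isEmpty_or_nonempty X with hX | hX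
  · have : IsEmpty Y := ⟨fun y => by obtain ⟨x, -⟩ := hf y; exact hX.elim x⟩
    simp [Set.univ_eq_empty_iff.2 this]
  let B : ℕ → Set X := fun n => Metric.ball (TopologicalSpace.denseSeq X n) (δ / 2)
  have hB : ⋃ n, B n = Set.univ := by
    refine Set.eq_univ_of_forall fun x => ?_
    obtain ⟨n, hn⟩ := (TopologicalSpace.denseRange_denseSeq X).exists_dist_lt x (half_pos hδ)
    exact Set.mem_iUnion.2 ⟨n, hn⟩
  have hm : ∀ n, MeasurableSet (disjointed B n) := fun n =>
    MeasurableSet.disjointed (fun _ => Metric.isOpen_ball.measurableSet) n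
  have hU : ⋃ n, disjointed B n = Set.univ := by rw [iUnion_disjointed, hB]
  have hL : ∀ n, LipschitzOnWith K f (disjointed B n) := by
    intro n
    refine LipschitzOnWith.of_dist_le_mul fun x hx y hy => hK x y ?_
    have h1 : dist x (TopologicalSpace.denseSeq X n) < δ / 2 := disjointed_subset B n hx
    have h2 : dist y (TopologicalSpace.denseSeq X n) < δ / 2 := disjointed_subset B n hy
    have := dist_triangle_right x y (TopologicalSpace.denseSeq X n)
    linarith
  calc μH[d] (Set.univ : Set Y) = μH[d] (⋃ n, f '' disjointed B n) := by
        rw [← Set.image_iUnion, hU, Set.image_univ, hf.range_eq]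
    _ ≤ ∑' n, μH[d] (f '' disjointed B n) := measure_iUnion_le _
    _ ≤ ∑' n, (K : ENNReal) ^ d * μH[d] (disjointed B n) :=
        ENNReal.tsum_le_tsum fun n => (hL n).hausdorffMeasure_image_le hd.le
    _ = (K : ENNReal) ^ d * μH[d] (Set.univ : Set X) := by
        rw [ENNReal.tsum_mul_left, ← measure_iUnion (disjoint_disjointed B) hm, hU]

lemma le_of_forall_K (a b : ENNReal) (d : ℝ)
    (H : ∀ K : NNReal, 1 < K → a ≤ (K : ENNReal) ^ d * b) : a ≤ b := by
  have ht : Tendsto (fun K : NNReal => (K : ENNReal) ^ d * b) (𝓝[>] 1) (𝓝 b) := by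
    have h1 : Tendsto (fun K : NNReal => (K : ENNReal) ^ d) (𝓝[>] 1) (𝓝 1) := by
      have := (ENNReal.continuous_rpow_const (y := d)).comp ENNReal.continuous_coe
      have := this.tendsto 1
      simp only [Function.comp_def, ENNReal.coe_one, ENNReal.one_rpow] at this
      exact this.mono_left nhdsWithin_le_nhds
    have := ENNReal.Tendsto.mul_const (b := b) h1 (Or.inl one_ne_zero)
    simpa using this
  exact ge_of_tendsto ht (eventually_nhdsWithin_of_forall fun K hK => H K hK)

/-- a pseudo isometry between compact metric spaces preserves the
`d`-dimensional Hausdorff measure. -/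
theorem stmt_17 {X₁ X₂ : Type*}
    [MetricSpace X₁] [CompactSpace X₁] [MeasurableSpace X₁] [BorelSpace X₁]
    [MetricSpace X₂] [CompactSpace X₂] [MeasurableSpace X₂] [BorelSpace X₂]
    (h : X₁ ≃ₜ X₂)
    (hpi : ∀ ε > (0 : ℝ), ∃ δ > (0 : ℝ), ∀ x y : X₁, 0 < dist x y → dist x y < δ →
      |dist (h x) (h y) / dist x y - 1| < ε)
    (d : ℝ) (hd : 0 < d) :
    μH[d] (Set.univ : Set X₁) = μH[d] (Set.univ : Set X₂) := by
  apply le_antisymm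
  · refine le_of_forall_K _ _ d fun K hK => ?_
    have hK' : (1 : ℝ) < K := by exact_mod_cast hK
    have hK0 : (0 : ℝ) < K := by linarith
    obtain ⟨δ, hδ, H⟩ := hpi (1 - (K : ℝ)⁻¹) (sub_pos.2 (inv_lt_one_of_one_lt₀ hK'))
    obtain ⟨η, hη, hu⟩ := Metric.uniformContinuous_iff.1
      (CompactSpace.uniformContinuous_of_continuous h.symm.continuous) δ hδ
    refine hm_le_of_local_lip h.symm h.symm.surjective K η hη (fun u v huv => ?_) d hd
    rcases (dist_nonneg (x := h.symm u) (y := h.symm v)).eq_or_lt with h0 | h0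
    · rw [← h0]; positivity
    have := (abs_lt.1 (H _ _ h0 (hu huv))).1
    rw [h.apply_symm_apply, h.apply_symm_apply] at this
    have h2 : (K : ℝ)⁻¹ < dist u v / dist (h.symm u) (h.symm v) := by linarith
    rw [lt_div_iff₀ h0, inv_mul_lt_iff₀ hK0] at h2
    exact h2.le
  · refine le_of_forall_K _ _ d fun K hK => ?_
    have hK' : (1 : ℝ) < K := by exact_mod_cast hK
    obtain ⟨δ, hδ, H⟩ := hpi ((K : ℝ) - 1) (by linarith)
    refine hm_le_of_local_lip h h.surjective K δ hδ (fun x y hxy => ?_) d hd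
    rcases (dist_nonneg (x := x) (y := y)).eq_or_lt with h0 | h0
    · rw [dist_eq_zero.1 h0.symm]; simp
    have := (abs_lt.1 (H _ _ h0 hxy)).2
    have h2 : dist (h x) (h y) / dist x y < K := by linarith
    rw [div_lt_iff₀ h0] at h2
    exact h2.le
end

section
/- Let f be an expansive homeomorphism with canonical coordinates of a compact metric space (M,d), where 2ε₀ is an expansivity constant for some ε₀ > 0 and d is self-similar for f with expanding factor λ > 1. Then for all ε > 0 there is δ > 0 such that if 0 < d(x,y) < δ (so that the bracket [x,y] is defined), then |max{d(x,[x,y]), d([x,y],y)}/d(x,y) − 1| < ε; in particular d([x,y],x) ≤ (1+ε)·d(x,y) and d([x,y],y) ≤ (1+ε)·d(x,y). -/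
open Filter Topology

def SSim {M : Type*} [MetricSpace M] (g : Equiv.Perm M) (ξ lam : ℝ) : Prop :=
  ∀ p q : M, dist p q ≤ ξ →
      max (dist (g p) (g q)) (dist (g.symm p) (g.symm q)) = lam * dist p q

theorem SSim.symm {M : Type*} [MetricSpace M] {g : Equiv.Perm M} {ξ lam : ℝ}
    (h : SSim g ξ lam) : SSim g.symm ξ lam := by
  intro p q hpq
  rw [max_comm]
  exact h p q hpq

theorem pow_app {M : Type*} (g : Equiv.Perm M) (n : ℕ) (p : M) :
    (g ^ (n + 1)) p = g ((g ^ n) p) := by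
  rw [pow_succ', Equiv.Perm.mul_apply]

theorem pow_app' {M : Type*} (g : Equiv.Perm M) (n : ℕ) (p : M) :
    (g ^ (n + 1)) p = (g ^ n) (g p) := by
  rw [pow_succ, Equiv.Perm.mul_apply]

theorem ss_up {M : Type*} [MetricSpace M] {g : Equiv.Perm M} {ξ lam : ℝ}
    (hlam : 1 < lam) (h : SSim g ξ lam) (p q : M) (N : ℕ) (hN : lam ^ N * dist p q ≤ ξ) :
    ∀ n ≤ N, dist ((g ^ n) p) ((g ^ n) q) ≤ lam ^ n * dist p q := by
  intro n
  induction n with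
  | zero => intro _; simp
  | succ n ih =>
    intro hn
    have h1 := ih (by omega)
    have h2 : lam ^ n * dist p q ≤ lam ^ N * dist p q :=
      mul_le_mul_of_nonneg_right (pow_le_pow_right₀ hlam.le (by omega)) dist_nonneg
    have h3 := h _ _ (h1.trans (h2.trans hN))
    have h4 := le_max_left (dist (g ((g ^ n) p)) (g ((g ^ n) q)))
      (dist (g.symm ((g ^ n) p)) (g.symm ((g ^ n) q)))
    rw [h3] at h4
    rw [pow_app, pow_app, pow_succ']
    have := mul_le_mul_of_nonneg_left h1 (by linarith : 0 ≤ lam)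
    linarith

theorem ss_grow {M : Type*} [MetricSpace M] {g : Equiv.Perm M} {ξ lam : ℝ}
    (hlam : 1 < lam) (h : SSim g ξ lam) (p q : M) (N : ℕ)
    (hN : ∀ n ≤ N, dist ((g ^ n) p) ((g ^ n) q) ≤ ξ)
    (h0 : dist (g p) (g q) = lam * dist p q) :
    ∀ n ≤ N, dist ((g ^ n) p) ((g ^ n) q) = lam ^ n * dist p q ∧
      dist ((g ^ (n + 1)) p) ((g ^ (n + 1)) q) = lam ^ (n + 1) * dist p q := by
  intro n
  induction n with
  | zero => intro _; simpa using h0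
  | succ n ih =>
    intro hn
    obtain ⟨h1, h2⟩ := ih (by omega)
    refine ⟨h2, ?_⟩
    have h3 := h _ _ (hN (n + 1) hn)
    rw [h2, pow_app g n p, pow_app g n q, Equiv.symm_apply_apply, Equiv.symm_apply_apply, h1,
      ← pow_app, ← pow_app, ← pow_app, ← pow_app] at h3
    rcases eq_or_ne p q with rfl | hpq
    · simp
    have hd : 0 < dist p q := dist_pos.2 hpq
    have hlt : lam ^ n * dist p q < lam * (lam ^ (n + 1) * dist p q) := by
      have : lam ^ n < lam ^ (n + 2) := pow_lt_pow_right₀ hlam (by omega)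
      calc _ < lam ^ (n + 2) * dist p q := mul_lt_mul_of_pos_right this hd
        _ = _ := by ring
    rcases max_choice (dist ((g ^ (n + 1 + 1)) p) ((g ^ (n + 1 + 1)) q)) (lam ^ n * dist p q)
      with h4 | h4
    · rw [h4] at h3
      rw [h3]; ring
    · rw [h4] at h3
      linarith

theorem ss_back {M : Type*} [MetricSpace M] {g : Equiv.Perm M} {ξ lam : ℝ}
    (hlam : 1 < lam) (h : SSim g ξ lam) (p q : M)
    (hN : ∀ n : ℕ, dist ((g ^ n) p) ((g ^ n) q) ≤ ξ) :
    dist (g.symm p) (g.symm q) = lam * dist p q := by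
  have h0 := h p q (by simpa using hN 0)
  rcases max_choice (dist (g p) (g q)) (dist (g.symm p) (g.symm q)) with h4 | h4
  · rw [h4] at h0
    rcases eq_or_ne p q with rfl | hpq
    · simp
    have hd : 0 < dist p q := dist_pos.2 hpq
    obtain ⟨n, hn⟩ := pow_unbounded_of_one_lt (ξ / dist p q) hlam
    have h5 := (ss_grow hlam h p q n (fun k _ => hN k) h0 n le_rfl).1
    rw [div_lt_iff₀ hd] at hn
    have := hN n
    linarith
  · rwa [h4] at h0

theorem ss_contract {M : Type*} [MetricSpace M] {g : Equiv.Perm M} {ξ lam : ℝ}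
    (hlam : 1 < lam) (h : SSim g ξ lam) (p q : M)
    (hN : ∀ n : ℕ, dist ((g ^ n) p) ((g ^ n) q) ≤ ξ) (n : ℕ) :
    lam ^ n * dist ((g ^ n) p) ((g ^ n) q) = dist p q := by
  induction n with
  | zero => simp
  | succ n ih =>
    have := ss_back hlam h ((g ^ (n + 1)) p) ((g ^ (n + 1)) q) (by
      intro k
      rw [← Equiv.Perm.mul_apply, ← Equiv.Perm.mul_apply, ← pow_add]
      exact hN _)
    rw [pow_app g n p, pow_app g n q, Equiv.symm_apply_apply, Equiv.symm_apply_apply,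
      ← pow_app, ← pow_app] at this
    rw [← ih, this]; ring

theorem ss_key {M : Type*} [MetricSpace M] {g : Equiv.Perm M} {ξ lam : ℝ}
    (hlam : 1 < lam) (h : SSim g ξ lam) (x y z : M) (N : ℕ)
    (hs : ∀ n : ℕ, dist ((g ^ n) x) ((g ^ n) z) ≤ ξ)
    (hu : ∀ n : ℕ, dist ((g.symm ^ n) y) ((g.symm ^ n) z) ≤ ξ)
    (hb : lam ^ N * dist y z ≤ ξ) (hD : lam ^ N * dist x y ≤ ξ) :
    dist y z ≤ dist x y + (lam ^ (2 * N))⁻¹ * dist x z ∧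
    (dist (g x) (g y) = lam * dist x y →
      dist x y ≤ dist y z + (lam ^ (2 * N))⁻¹ * dist x z) := by
  have hK : 0 < lam ^ N := pow_pos (by linarith) N
  have hle : ∀ p q : M, lam ^ N * dist p q ≤ ξ → ∀ n ≤ N, dist ((g ^ n) p) ((g ^ n) q) ≤ ξ := by
    intro p q hpq n hn
    refine (ss_up hlam h p q N hpq n hn).trans (le_trans ?_ hpq)
    exact mul_le_mul_of_nonneg_right (pow_le_pow_right₀ hlam.le hn) dist_nonneg
  have h1 := ss_contract hlam h x z hs N
  have h2 := ss_back hlam h.symm y z hu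
  have h3 := (ss_grow hlam h y z N (hle y z hb) h2 N le_rfl).1
  have h4 := ss_up hlam h x y N hD N le_rfl
  have e : (lam ^ (2 * N))⁻¹ * dist x z = dist ((g ^ N) x) ((g ^ N) z) / lam ^ N := by
    rw [← h1, two_mul, pow_add]; field_simp
  rw [e]
  constructor
  · have h5 := dist_triangle_left ((g ^ N) y) ((g ^ N) z) ((g ^ N) x)
    rw [h3] at h5
    rw [← sub_le_iff_le_add', le_div_iff₀ hK]
    nlinarith
  · intro h6
    have h7 := (ss_grow hlam h x y N (hle x y hD) h6 N le_rfl).1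
    have h5 := dist_triangle_right ((g ^ N) x) ((g ^ N) y) ((g ^ N) z)
    rw [h3, h7] at h5
    rw [← sub_le_iff_le_add', le_div_iff₀ hK]
    nlinarith

theorem stmt_18 {M : Type*} [MetricSpace M] [CompactSpace M]
    (f : Equiv.Perm M) (hf : Continuous f) (hf' : Continuous f.symm)
    (ε₀ : ℝ) (hε₀ : 0 < ε₀)
    (hexp : ∀ x y : M, x ≠ y → ∃ n : ℤ, 2 * ε₀ < dist ((f ^ n) x) ((f ^ n) y))
    (ξ lam : ℝ) (hξ : 0 < ξ) (hlam : 1 < lam)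
    (hss : ∀ p q : M, dist p q ≤ ξ →
      max (dist (f p) (f q)) (dist (f.symm p) (f.symm q)) = lam * dist p q)
    (hcc : ∀ ε > (0 : ℝ), ∃ δ > (0 : ℝ), ∀ x y : M, dist x y < δ → (Ws f ε x ∩ Wu f ε y).Nonempty)
    (δ₀ : ℝ) (hδ₀ : 0 < δ₀)
    (br : M → M → M)
    (hbr : ∀ x y : M, dist x y < δ₀ → br x y ∈ Ws f ε₀ x ∩ Wu f ε₀ y) :
    ∀ ε > (0 : ℝ), ∃ δ > (0 : ℝ), ∀ x y : M, 0 < dist x y → dist x y < δ →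
      |max (dist x (br x y)) (dist (br x y) y) / dist x y - 1| < ε ∧
      dist (br x y) x ≤ (1 + ε) * dist x y ∧
      dist (br x y) y ≤ (1 + ε) * dist x y := by
  have hS : SSim f ξ lam := hss
  intro ε hε
  -- choose N
  obtain ⟨N, hN⟩ := pow_unbounded_of_one_lt ((1 + ε) / ε) hlam
  have hK : 0 < lam ^ N := pow_pos (by linarith) N
  have hK1 : 1 ≤ lam ^ N := one_le_pow₀ hlam.le
  obtain ⟨ε₁, hε₁⟩ : ∃ e, e = min ε₀ (ξ / (2 * lam ^ N)) := ⟨_, rfl⟩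
  have hpos : 0 < ε₁ := by rw [hε₁]; exact lt_min hε₀ (by positivity)
  have hle0 : ε₁ ≤ ε₀ := by rw [hε₁]; exact min_le_left _ _
  have hle1 : lam ^ N * (2 * ε₁) ≤ ξ := by
    have : ε₁ ≤ ξ / (2 * lam ^ N) := by rw [hε₁]; exact min_le_right _ _
    rw [le_div_iff₀ (by positivity)] at this
    linarith
  have hle2 : ε₁ ≤ ξ := by nlinarith
  obtain ⟨δ₁, hδ₁, hW⟩ := hcc ε₁ hpos
  refine ⟨min δ₀ δ₁, lt_min hδ₀ hδ₁, ?_⟩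
  intro x y hxy hlt
  obtain ⟨w, hws, hwu⟩ := hW x y (hlt.trans_le (min_le_right _ _))
  obtain ⟨hzs, hzu⟩ := hbr x y (hlt.trans_le (min_le_left _ _))
  have hzw : br x y = w := by
    by_contra hne
    obtain ⟨n, hn⟩ := hexp _ _ hne
    have key : dist ((f ^ n) (br x y)) ((f ^ n) w) ≤ ε₀ + ε₀ := by
      obtain ⟨k, rfl | rfl⟩ := n.eq_nat_or_neg
      · rw [zpow_natCast]
        exact (dist_triangle_left _ _ ((f ^ k) x)).trans
          (add_le_add (hzs k) ((hws k).trans hle0))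
      · rw [zpow_neg, zpow_natCast, ← inv_pow]
        exact (dist_triangle_left _ _ ((f⁻¹ ^ k) y)).trans
          (add_le_add (hzu k) ((hwu k).trans hle0))
    linarith
  rw [hzw]
  have ha : dist x w ≤ ε₁ := by simpa using hws 0
  have hb : dist y w ≤ ε₁ := by simpa using hwu 0
  have hD : dist x y ≤ 2 * ε₁ := by
    have := dist_triangle_right x y w
    linarith
  have hbN : lam ^ N * dist y w ≤ ξ :=
    (mul_le_mul_of_nonneg_left (by linarith) hK.le).trans hle1
  have haN : lam ^ N * dist x w ≤ ξ :=
    (mul_le_mul_of_nonneg_left (by linarith) hK.le).trans hle1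
  have hDN : lam ^ N * dist x y ≤ ξ :=
    (mul_le_mul_of_nonneg_left hD hK.le).trans hle1
  have hDξ : dist x y ≤ ξ := by nlinarith [dist_nonneg (x := x) (y := y)]
  obtain ⟨k1, k2⟩ := ss_key hlam hS x y w N (fun n => (hws n).trans hle2)
    (fun n => (hwu n).trans hle2) hbN hDN
  obtain ⟨k3, k4⟩ := ss_key hlam hS.symm y x w N (fun n => (hwu n).trans hle2)
    (fun n => (hws n).trans hle2) haN (by rwa [dist_comm])
  rw [dist_comm y x] at k3 k4
  rw [dist_comm (f.symm y)] at k4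
  obtain ⟨t, ht⟩ : ∃ t, t = (lam ^ (2 * N))⁻¹ := ⟨_, rfl⟩
  rw [← ht] at k1 k2 k3 k4
  have ht0 : 0 < t := by rw [ht]; exact inv_pos.2 (pow_pos (by linarith) _)
  have htε : t * (1 + ε) < ε := by
    rw [div_lt_iff₀ hε] at hN
    have h2 : lam ^ N ≤ lam ^ (2 * N) := pow_le_pow_right₀ hlam.le (by omega)
    have h3 : t * lam ^ (2 * N) = 1 := by
      rw [ht]; exact inv_mul_cancel₀ (pow_pos (by linarith) _).ne'
    have h4 : 1 + ε < lam ^ (2 * N) * ε :=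
      hN.trans_le (mul_le_mul_of_nonneg_right h2 hε.le)
    calc t * (1 + ε) < t * (lam ^ (2 * N) * ε) := mul_lt_mul_of_pos_left h4 ht0
      _ = ε := by rw [← mul_assoc, h3, one_mul]
  rw [dist_comm w y, dist_comm w x]
  obtain ⟨m, hm⟩ : ∃ m, m = max (dist x w) (dist y w) := ⟨_, rfl⟩
  have ham : dist x w ≤ m := by rw [hm]; exact le_max_left _ _
  have hbm : dist y w ≤ m := by rw [hm]; exact le_max_right _ _
  have hta : t * dist x w ≤ t * m := mul_le_mul_of_nonneg_left ham ht0.le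
  have htb : t * dist y w ≤ t * m := mul_le_mul_of_nonneg_left hbm ht0.le
  have hm1 : m ≤ dist x y + t * m := by
    have : max (dist x w) (dist y w) ≤ dist x y + t * m := max_le (by linarith) (by linarith)
    rwa [← hm] at this
  have hm2 : dist x y ≤ m + t * m := by
    have h0 := hS x y hDξ
    rcases max_choice (dist (f x) (f y)) (dist (f.symm x) (f.symm y)) with h4 | h4
    · rw [h4] at h0
      have := k2 h0
      linarith
    · rw [h4] at h0
      have := k4 h0
      linarith
  rw [← hm]
  have ht1 : t < 1 := by nlinarith
  have htlt : t < ε := by nlinarith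
  have hup : m < (1 + ε) * dist x y := by
    by_contra hcon
    push Not at hcon
    nlinarith [mul_le_mul_of_nonneg_left hcon (by linarith : 0 ≤ 1 - t),
      mul_pos hxy (by linarith : 0 < ε - t * (1 + ε))]
  have hlow : (1 - ε) * dist x y < m := by
    have hmpos : 0 < m := by
      by_contra hcon
      push Not at hcon
      nlinarith
    by_contra hcon
    push Not at hcon
    have e1 : 0 < 1 - ε := by
      by_contra h
      push Not at h
      nlinarith
    nlinarith [mul_le_mul_of_nonneg_left hm2 e1.le, mul_pos hmpos (by linarith : 0 < ε - t),
      mul_pos (mul_pos hmpos hε) ht0]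
  refine ⟨?_, ham.trans hup.le, hbm.trans hup.le⟩
  rw [abs_lt]
  constructor
  · rw [lt_sub_iff_add_lt, lt_div_iff₀ hxy]; linarith
  · rw [sub_lt_iff_lt_add, div_lt_iff₀ hxy]; linarith
end
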